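/- arXiv:2007.14088 — 2 statements merged into one kernel-verified Lean document; each statement's English description precedes it below -/
import Mathlib

section
/- Let F be a finite field of characteristic 2 with q = 2^n elements, and let G = C_8 × C_4. Then the unit group of the group algebra FG is isomorphic to C_8^n × C_4^{5n} × C_2^{18n} × C_{2^n - 1}. -/
/-- The cyclic group of order `m`, realized as `Multiplicative (ZMod m)`. -/
abbrev C (m : ℕ) : Type := Multiplicative (ZMod m)

/-!
A finite abelian `p`-group is determined by its numbers of solutions of `x ^ p ^ k = 1`.
Let `R` be a finite reduced ring of characteristic `p` and `G` a finite abelian `p`-group. The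
augmentation splits `R[G]ˣ` as `V × Rˣ`, where `V` is a `p`-group and `Rˣ` has no `p`-torsion, and
`u ↦ u - 1` matches the `p ^ k`-torsion of `R[G]ˣ` with the kernel of the `k`-th iterate of
Frobenius on `R[G]`. That iterate raises coefficients and group elements to the `p ^ k`-th power,
and the first is injective, so its kernel is that of `R[G] → R[G ^ p ^ k]` and has
`|R| ^ (|G| - |G ^ p ^ k|)` elements.
-/

open MonoidAlgebra

section Torsion

/-- The number of solutions of `x ^ k = 1` in a commutative group, that is, the order of its
`k`-torsion subgroup; it is `0` when there are infinitely many. -/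
noncomputable def torsionCard (A : Type*) [CommGroup A] (k : ℕ) : ℕ :=
  Nat.card (powMonoidHom k : A →* A).ker

variable {A B : Type*} [CommGroup A] [CommGroup B]

lemma torsionCard_congr (e : A ≃* B) (k : ℕ) : torsionCard A k = torsionCard B k :=
  Nat.card_congr <| e.toEquiv.subtypeEquiv fun a ↦ by
    simp [MonoidHom.mem_ker, ← map_pow]

lemma torsionCard_prod (k : ℕ) : torsionCard (A × B) k = torsionCard A k * torsionCard B k := by
  rw [torsionCard, torsionCard, torsionCard, ← Nat.card_prod]
  exact Nat.card_congr <| (Equiv.subtypeEquivRight fun _ ↦ Prod.ext_iff).trans <|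
    Equiv.subtypeProdEquivProd (p := (· ^ k = 1)) (q := (· ^ k = 1))

lemma torsionCard_pi {ι : Type*} [Fintype ι] {M : ι → Type*} [∀ i, CommGroup (M i)] (k : ℕ) :
    torsionCard (∀ i, M i) k = ∏ i, torsionCard (M i) k := by
  simp only [torsionCard, ← Nat.card_pi]
  exact Nat.card_congr <| (Equiv.subtypeEquivRight fun _ ↦ funext_iff).trans <|
    Equiv.subtypePiEquivPi (p := fun _ ↦ (· ^ k = 1))

lemma torsionCard_C (m k : ℕ) [NeZero m] : torsionCard (C m) k = m.gcd k := by
  rw [torsionCard, IsCyclic.card_powMonoidHom_ker]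
  simp

lemma torsionCard_C_pow (p e k : ℕ) [NeZero p] :
    torsionCard (C (p ^ e)) (p ^ k) = p ^ min e k := by
  rw [torsionCard_C]
  rcases le_total e k with h | h
  · rw [min_eq_left h, Nat.gcd_eq_left (pow_dvd_pow p h)]
  · rw [min_eq_right h, Nat.gcd_eq_right (pow_dvd_pow p h)]

lemma torsionCard_pi_C_pow {ι : Type*} [Fintype ι] (p k : ℕ) [NeZero p] (e : ι → ℕ) :
    torsionCard (∀ i, C (p ^ e i)) (p ^ k) = p ^ ∑ i, min (e i) k := by
  simp_rw [torsionCard_pi, torsionCard_C_pow, Finset.prod_pow_eq_pow_sum]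

lemma card_range_powMonoidHom_mul_torsionCard (A : Type*) [CommGroup A] (k : ℕ) :
    Nat.card (powMonoidHom k : A →* A).range * torsionCard A k = Nat.card A := by
  rw [← Subgroup.index_ker, mul_comm]
  exact Subgroup.card_mul_index _

end Torsion

section Classification

lemma sum_min_succ {ι : Type*} [Fintype ι] (e : ι → ℕ) (k : ℕ) :
    ∑ i, min (e i) (k + 1) = ∑ i, min (e i) k + Nat.card {i // k < e i} := by
  rw [Nat.card_eq_fintype_card, Fintype.card_subtype, Finset.card_filter,
    ← Finset.sum_add_distrib]
  refine Finset.sum_congr rfl fun i _ ↦ ?_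
  split_ifs <;> omega

lemma card_fiber_succ_add {ι : Type*} [Finite ι] (e : ι → ℕ) (k : ℕ) :
    Nat.card {i // e i = k + 1} + Nat.card {i // k + 1 < e i} = Nat.card {i // k < e i} := by
  have := Fintype.ofFinite ι
  simp only [Nat.card_eq_fintype_card, Fintype.card_subtype, Finset.card_filter,
    ← Finset.sum_add_distrib]
  refine Finset.sum_congr rfl fun i _ ↦ ?_
  split_ifs <;> omega

lemma exists_equiv_comp_eq_of_sum_min_eq {ι κ : Type*} [Fintype ι] [Fintype κ] {e : ι → ℕ}
    {f : κ → ℕ} (he : ∀ i, 0 < e i) (hf : ∀ j, 0 < f j)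
    (h : ∀ k, ∑ i, min (e i) k = ∑ j, min (f j) k) : ∃ σ : ι ≃ κ, f ∘ σ = e := by
  have card_lt (k : ℕ) : Nat.card {i // k < e i} = Nat.card {j // k < f j} := by
    have := h (k + 1)
    rwa [sum_min_succ, sum_min_succ, h k, add_right_inj] at this
  have card_fiber (c : ℕ) : Nat.card {i // e i = c} = Nat.card {j // f j = c} := by
    rcases c with _ | k
    · simp [(he _).ne', (hf _).ne']
    · have := card_fiber_succ_add e k
      rwa [card_lt, card_lt, ← card_fiber_succ_add f k, add_left_inj] at this
  let fiberEquiv (c : ℕ) : {i // e i = c} ≃ {j // f j = c} :=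
    (Finite.card_eq.mp (card_fiber c)).some
  exact ⟨.ofFiberEquiv fiberEquiv, funext (Equiv.ofFiberEquiv_map fiberEquiv)⟩

variable {p : ℕ} [Fact p.Prime] {A B : Type*} [CommGroup A] [Finite A] [CommGroup B] [Finite B]

lemma exists_mulEquiv_pi_C_pow (hA : IsPGroup p A) :
    ∃ (ι : Type) (_ : Fintype ι) (e : ι → ℕ),
      (∀ i, 0 < e i) ∧ Nonempty (A ≃* ∀ i, C (p ^ e i)) := by
  classical
  obtain ⟨ι, hι, m, hm, ⟨φ⟩⟩ := CommGroup.equiv_prod_multiplicative_zmod_of_finite A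
  have exists_pow (i : ι) : ∃ e, m i = p ^ e := by
    have : NeZero (m i) := ⟨(hm i).ne_bot⟩
    have factor : IsPGroup p (C (m i)) := (hA.of_equiv φ).of_injective
      (MonoidHom.mulSingle (fun i ↦ C (m i)) i) (Pi.mulSingle_injective (M := fun i ↦ C (m i)) i)
    simpa using IsPGroup.iff_card.mp factor
  choose e he using exists_pow
  obtain rfl : m = fun i ↦ p ^ e i := funext he
  exact ⟨ι, hι, e, fun i ↦ Nat.pos_of_ne_zero fun h ↦ by simpa [h] using hm i, ⟨φ⟩⟩

theorem nonempty_mulEquiv_of_torsionCard_eq (hA : IsPGroup p A) (hB : IsPGroup p B)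
    (h : ∀ k, torsionCard A (p ^ k) = torsionCard B (p ^ k)) : Nonempty (A ≃* B) := by
  obtain ⟨ι, _, e, he, ⟨φ⟩⟩ := exists_mulEquiv_pi_C_pow hA
  obtain ⟨κ, _, f, hf, ⟨ψ⟩⟩ := exists_mulEquiv_pi_C_pow hB
  have : NeZero p := ⟨(Fact.out : p.Prime).ne_zero⟩
  have sums (k : ℕ) : ∑ i, min (e i) k = ∑ j, min (f j) k := by
    apply Nat.pow_right_injective (Fact.out : p.Prime).two_le
    simpa only [torsionCard_congr φ, torsionCard_congr ψ, torsionCard_pi_C_pow] using h k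
  obtain ⟨σ, rfl⟩ := exists_equiv_comp_eq_of_sum_min_eq he hf sums
  let reindex : (∀ j, C (p ^ f j)) ≃* ∀ i, C (p ^ f (σ i)) :=
    { Equiv.piCongrLeft' (fun j ↦ C (p ^ f j)) σ.symm with map_mul' := fun _ _ ↦ rfl }
  exact ⟨φ.trans (reindex.symm.trans ψ.symm)⟩

end Classification

section Frobenius

instance expChar_monoidAlgebra {R M : Type*} [CommSemiring R] [Monoid M] (p : ℕ) [ExpChar R p] :
    ExpChar (MonoidAlgebra R M) p :=
  expChar_of_injective_ringHom (f := singleOneRingHom) single_right_injective p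

lemma iterateFrobenius_monoidAlgebra {R M : Type*} [CommSemiring R] [CommMonoid M] (p k : ℕ)
    [ExpChar R p] :
    iterateFrobenius (MonoidAlgebra R M) p k =
      (mapRingHom M (iterateFrobenius R p k)).comp
        (mapDomainRingHom R (powMonoidHom (p ^ k) : M →* M)) := by
  ext x : 2 <;> simp [iterateFrobenius_def, single_pow]

lemma ker_iterateFrobenius_monoidAlgebra {R M : Type*} [CommRing R] [IsReduced R] [CommMonoid M]
    (p k : ℕ) [ExpChar R p] :
    RingHom.ker (iterateFrobenius (MonoidAlgebra R M) p k) =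
      RingHom.ker (mapDomainRingHom R (powMonoidHom (p ^ k) : M →* M)) := by
  rw [iterateFrobenius_monoidAlgebra]
  exact RingHom.ker_comp_of_injective _
    (map_injective (iterateFrobenius R p k : R →+ R) (iterateFrobenius_inj R p k))

lemma card_monoidAlgebra (R M : Type*) [Semiring R] [Finite M] :
    Nat.card (MonoidAlgebra R M) = Nat.card R ^ Nat.card M := by
  rw [Nat.card_congr (coeffEquiv.trans Finsupp.equivFunOnFinite), Nat.card_fun]

lemma card_ker_mapDomainRingHom (R : Type*) {G H : Type*} [Ring R] [Group G] [Finite G] [Group H]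
    (f : G →* H) :
    Nat.card (RingHom.ker (mapDomainRingHom R f)) * Nat.card R ^ Nat.card f.range =
      Nat.card R ^ Nat.card G := by
  let φ := mapDomainRingHom R f.rangeRestrict
  have ker_eq : RingHom.ker (mapDomainRingHom R f) = RingHom.ker φ := by
    have : mapDomainRingHom R f = (mapDomainRingHom R f.range.subtype).comp φ := by
      rw [← mapDomainRingHom_comp, f.subtype_comp_rangeRestrict]
    rw [this]
    exact RingHom.ker_comp_of_injective _ (mapDomain_injective Subtype.val_injective)
  have : Finite f.range := .of_surjective _ f.rangeRestrict_surjective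
  have surj : Function.Surjective φ := fun y ↦ by
    obtain ⟨x, hx⟩ := Finsupp.mapDomain_surjective f.rangeRestrict_surjective y.coeff
    exact ⟨.ofCoeff x, congrArg MonoidAlgebra.ofCoeff hx⟩
  rw [ker_eq, ← card_monoidAlgebra, ← card_monoidAlgebra,
    ← AddSubgroup.card_mul_index φ.toAddMonoidHom.ker, AddSubgroup.index_ker,
    AddMonoidHom.range_eq_top.mpr surj, AddSubgroup.card_top]
  rfl

lemma torsionCard_units (A : Type*) [CommRing A] (p k : ℕ) [ExpChar A p] :
    torsionCard Aˣ (p ^ k) = Nat.card (RingHom.ker (iterateFrobenius A p k)) := by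
  have mem_iff (a : A) : a - 1 ∈ RingHom.ker (iterateFrobenius A p k) ↔ a ^ p ^ k = 1 := by
    rw [RingHom.mem_ker, map_sub, map_one, sub_eq_zero, iterateFrobenius_def]
  refine Nat.card_congr (Equiv.ofBijective
    (fun u ↦ ⟨(u : Aˣ) - 1, (mem_iff _).mpr (congrArg Units.val u.2)⟩) ⟨fun u v h ↦ ?_, ?_⟩)
  · exact Subtype.ext (Units.ext (sub_left_injective (congrArg Subtype.val h)))
  · rintro ⟨a, ha⟩
    have pow_eq : (a + 1) ^ p ^ k = 1 := (mem_iff _).mp (by rwa [add_sub_cancel_right])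
    exact ⟨⟨Units.ofPowEqOne _ _ pow_eq (expChar_pow_pos A p k).ne', Units.pow_ofPowEqOne _ _⟩,
      Subtype.ext (add_sub_cancel_right a 1)⟩

lemma torsionCard_units_of_isReduced (R : Type*) [CommRing R] [IsReduced R] (p k : ℕ)
    [ExpChar R p] : torsionCard Rˣ (p ^ k) = 1 := by
  rw [torsionCard_units, (RingHom.injective_iff_ker_eq_bot _).mp (iterateFrobenius_inj R p k)]
  exact Nat.card_unique

lemma torsionCard_units_monoidAlgebra (R G : Type*) [CommRing R] [IsReduced R] [CommGroup G]
    [Finite G] (p k : ℕ) [ExpChar R p] :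
    torsionCard (MonoidAlgebra R G)ˣ (p ^ k) *
      Nat.card R ^ Nat.card (powMonoidHom (p ^ k) : G →* G).range = Nat.card R ^ Nat.card G := by
  rw [torsionCard_units, ker_iterateFrobenius_monoidAlgebra, card_ker_mapDomainRingHom]

end Frobenius

section NormalizedUnits

/-- A commutative group with a retraction `f` onto `H`, with section `s`, is the direct product of
the kernel of `f` and `H`. -/
def mulEquivKerProd {A H : Type*} [CommGroup A] [Group H] (f : A →* H) (s : H →* A)
    (hs : Function.LeftInverse f s) : A ≃* f.ker × H where
  toFun a := (⟨a * (s (f a))⁻¹, by simp [MonoidHom.mem_ker, hs (f a)]⟩, f a)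
  invFun x := x.1 * s x.2
  left_inv a := inv_mul_cancel_right a _
  right_inv := by
    rintro ⟨⟨a, ha⟩, h⟩
    simp [MonoidHom.mem_ker.mp ha, hs h]
  map_mul' a b := Prod.ext
    (Subtype.ext <| show a * b * (s (f (a * b)))⁻¹ = a * (s (f a))⁻¹ * (b * (s (f b))⁻¹) by
      rw [map_mul, map_mul, mul_inv, mul_mul_mul_comm])
    (map_mul f a b)

section CommMonoid

variable (R M : Type*) [CommSemiring R] [CommMonoid M]

/-- The augmentation map of a monoid algebra, sending an element to the sum of its coefficients. -/
noncomputable def augmentation : MonoidAlgebra R M →ₐ[R] R := lift R R M 1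

/-- The group of normalized units of a monoid algebra: the units of augmentation `1`. -/
noncomputable def normalizedUnits : Subgroup (MonoidAlgebra R M)ˣ :=
  (Units.map (augmentation R M : MonoidAlgebra R M →* R)).ker

/-- The splitting of the units of a monoid algebra into normalized units and constants. -/
noncomputable def unitsEquivNormalizedUnitsProd :
    (MonoidAlgebra R M)ˣ ≃* normalizedUnits R M × Rˣ :=
  mulEquivKerProd _ (Units.map (algebraMap R (MonoidAlgebra R M) : R →* MonoidAlgebra R M))
    fun c ↦ Units.ext ((augmentation R M).commutes (c : R))

variable {R M}

lemma pow_eq_algebraMap_augmentation {p k : ℕ} [ExpChar R p] (hM : ∀ m : M, m ^ p ^ k = 1)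
    (a : MonoidAlgebra R M) :
    a ^ p ^ k = algebraMap R (MonoidAlgebra R M) (augmentation R M a ^ p ^ k) := by
  have : iterateFrobenius (MonoidAlgebra R M) p k =
      (algebraMap R (MonoidAlgebra R M)).comp
        ((iterateFrobenius R p k).comp (augmentation R M : MonoidAlgebra R M →+* R)) := by
    ext x : 2 <;> simp [iterateFrobenius_def, single_pow, augmentation, hM]
  exact DFunLike.congr_fun this a

end CommMonoid

variable {R G : Type*} [CommGroup G] [Finite G]

lemma isPGroup_normalizedUnits [CommSemiring R] {p : ℕ} [ExpChar R p] (hG : IsPGroup p G) :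
    IsPGroup p (normalizedUnits R G) := by
  obtain ⟨k, hk⟩ := isPGroup_iff_exists_pow_pow_eq_one.mp hG
  refine isPGroup_iff_pow_pow_eq_one.mpr fun u ↦ ⟨k, Subtype.ext (Units.ext ?_)⟩
  have aug_eq : augmentation R G (u : (MonoidAlgebra R G)ˣ) = 1 := congrArg Units.val u.2
  simpa [aug_eq, one_def] using pow_eq_algebraMap_augmentation hk (u : (MonoidAlgebra R G)ˣ).val

theorem nonempty_units_monoidAlgebra_mulEquiv {V : Type*} [CommRing R] [IsReduced R] [Finite R]
    [CommGroup V] [Finite V] {p : ℕ} [Fact p.Prime] [CharP R p]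
    (hG : IsPGroup p G) (hV : IsPGroup p V)
    (h : ∀ k, torsionCard V (p ^ k) * Nat.card R ^ Nat.card (powMonoidHom (p ^ k) : G →* G).range =
      Nat.card R ^ Nat.card G) :
    Nonempty ((MonoidAlgebra R G)ˣ ≃* V × Rˣ) := by
  have : Finite (MonoidAlgebra R G) :=
    .of_equiv _ (coeffEquiv.trans Finsupp.equivFunOnFinite).symm
  have torsion (k : ℕ) : torsionCard (normalizedUnits R G) (p ^ k) = torsionCard V (p ^ k) := by
    have hU := torsionCard_units_monoidAlgebra R G p k
    rw [torsionCard_congr (unitsEquivNormalizedUnitsProd R G), torsionCard_prod,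
      torsionCard_units_of_isReduced, mul_one, ← h k] at hU
    exact Nat.eq_of_mul_eq_mul_right (pow_pos Nat.card_pos _) hU
  obtain ⟨φ⟩ := nonempty_mulEquiv_of_torsionCard_eq (isPGroup_normalizedUnits hG) hV torsion
  exact ⟨(unitsEquivNormalizedUnitsProd R G).trans (φ.prodCongr (.refl _))⟩

end NormalizedUnits

lemma nonempty_units_mulEquiv_C (F : Type*) [Field F] [Finite F] :
    Nonempty (Fˣ ≃* C (Nat.card F - 1)) := by
  refine ⟨mulEquivOfCyclicCardEq ?_⟩
  rw [Nat.card_units]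
  exact (Nat.card_zmod _).symm

lemma card_range_powMonoidHom_C_eight_prod_C_four (k : ℕ) :
    Nat.card (powMonoidHom (2 ^ k) : C 8 × C 4 →* C 8 × C 4).range =
      2 ^ (5 - (min 3 k + min 2 k)) := by
  have h := card_range_powMonoidHom_mul_torsionCard (C 8 × C 4) (2 ^ k)
  have card_eq :
      Nat.card (C 8 × C 4) = 2 ^ (5 - (min 3 k + min 2 k)) * 2 ^ (min 3 k + min 2 k) := by
    rw [← pow_add, Nat.sub_add_cancel (by omega)]
    simp
  have h8 : torsionCard (C 8) (2 ^ k) = 2 ^ min 3 k := torsionCard_C_pow 2 3 k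
  have h4 : torsionCard (C 4) (2 ^ k) = 2 ^ min 2 k := torsionCard_C_pow 2 2 k
  rw [torsionCard_prod, h8, h4, ← pow_add, card_eq] at h
  exact Nat.eq_of_mul_eq_mul_right (by positivity) h

lemma torsionCard_pi_C_eight_prod_C_four_prod_C_two (a b c k : ℕ) :
    torsionCard ((Fin a → C 8) × (Fin b → C 4) × (Fin c → C 2)) (2 ^ k) =
      2 ^ (a * min 3 k + b * min 2 k + c * min 1 k) := by
  have h8 : torsionCard (Fin a → C 8) (2 ^ k) = _ := torsionCard_pi_C_pow 2 k fun _ ↦ 3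
  have h4 : torsionCard (Fin b → C 4) (2 ^ k) = _ := torsionCard_pi_C_pow 2 k fun _ ↦ 2
  have h2 : torsionCard (Fin c → C 2) (2 ^ k) = _ := torsionCard_pi_C_pow 2 k fun _ ↦ 1
  rw [torsionCard_prod, torsionCard_prod, h8, h4, h2]
  simp [pow_add, mul_assoc]

theorem unit_group_stmt_4 (F : Type*) [Field F] [Fintype F] [CharP F 2]
    (n : ℕ) (hn : 0 < n) (hF : Fintype.card F = 2 ^ n) :
    Nonempty ((MonoidAlgebra F (C 8 × C 4))ˣ ≃*
      ((Fin (n) → C 8) × (Fin (5 * n) → C 4) × (Fin (18 * n) → C 2) × C (2 ^ n - 1))) := by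
  have hG : IsPGroup 2 (C 8 × C 4) := .of_card (n := 5) (by simp)
  have hV : IsPGroup 2 ((Fin n → C 8) × (Fin (5 * n) → C 4) × (Fin (18 * n) → C 2)) :=
    .of_card (n := n * 3 + 5 * n * 2 + 18 * n) (by simp [pow_add, pow_mul', mul_assoc])
  have cardF : Nat.card F = 2 ^ n := by rw [Nat.card_eq_fintype_card, hF]
  have torsion (k : ℕ) :
      torsionCard ((Fin n → C 8) × (Fin (5 * n) → C 4) × (Fin (18 * n) → C 2)) (2 ^ k) *
        Nat.card F ^ Nat.card (powMonoidHom (2 ^ k) : C 8 × C 4 →* C 8 × C 4).range =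
      Nat.card F ^ Nat.card (C 8 × C 4) := by
    rw [torsionCard_pi_C_eight_prod_C_four_prod_C_two,
      card_range_powMonoidHom_C_eight_prod_C_four, cardF, show Nat.card (C 8 × C 4) = 32 by simp,
      ← pow_mul, ← pow_mul, ← pow_add]
    congr 1
    rcases k with _ | _ | _ | k <;> simp <;> ring
  obtain ⟨φ⟩ := nonempty_units_monoidAlgebra_mulEquiv hG hV torsion
  obtain ⟨ψ⟩ := nonempty_units_mulEquiv_C F
  rw [cardF] at ψ
  exact ⟨φ.trans <| (MulEquiv.prodCongr (.refl _) ψ).trans <|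
    MulEquiv.prodAssoc.trans <| .prodCongr (.refl _) MulEquiv.prodAssoc⟩
end

section
/- Let F be a finite field of characteristic p > 2 with q = p^n elements, and let G = C_8 × C_2 × C_2. Then the unit group U(FG) is isomorphic to: C_{p^n-1}^{32} if q ≡ 1 (mod 8); C_{p^n-1}^8 × C_{p^{2n}-1}^{12} if q ≡ -1 (mod 8); C_{p^n-1}^8 × C_{p^{2n}-1}^{12} if q ≡ 3 (mod 8); C_{p^n-1}^{16} × C_{p^{2n}-1}^8 if q ≡ -3 (mod 8). -/
/-!
If every element of `G` is fixed by `g ↦ g ^ (q ^ 2)`, then every element of `FG` is fixed by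
`x ↦ x ^ (q ^ 2)`, so `FG` is a reduced finite ring, hence a product of fields with `q` or `q ^ 2`
elements. Comparing cardinalities gives one equation between the numbers of factors of the two
kinds. A second one comes from the solutions of `x ^ q = x`: there are `q` of them in each factor,
while in `FG` they are the `x` whose coefficients are constant on the orbits of the involution
`g ↦ g ^ q` of `G`.
-/

section InvariantFunctions

variable {α β : Type*} {σ : α → α}

/-- Functions invariant under an involution `σ` of a linear order are arbitrary functions on the
set of minima of the orbits `{a, σ a}`. -/
def invariantFunctionEquiv [LinearOrder α] (hσ : σ.Involutive) :
    {f : α → β // ∀ a, f (σ a) = f a} ≃ ({a // a ≤ σ a} → β) where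
  toFun f a := f.1 a
  invFun g :=
    ⟨fun a ↦ g ⟨min a (σ a), by rcases le_total a (σ a) with h | h <;> simp [h, hσ a]⟩,
      fun a ↦ by simp only [hσ a, min_comm]⟩
  left_inv f := by
    ext a
    rcases le_total a (σ a) with h | h
    · simp only [min_eq_left h]
    · simp only [min_eq_right h, f.2]
  right_inv g := by
    ext ⟨a, ha⟩
    simp only [min_eq_left ha]

theorem two_mul_natCard_le_apply_of_involutive [LinearOrder α] [Finite α] (hσ : σ.Involutive) :
    2 * Nat.card {a // a ≤ σ a} = Nat.card α + Nat.card {a // σ a = a} := by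
  have hswap : {a | a ≤ σ a}.ncard = {a | σ a ≤ a}.ncard :=
    Nat.card_congr (hσ.toPerm.subtypeEquiv fun a ↦ by simp [hσ a])
  have hunion : {a | a ≤ σ a} ∪ {a | σ a ≤ a} = Set.univ :=
    Set.eq_univ_of_forall fun a ↦ le_total a (σ a)
  have hinter : {a | a ≤ σ a} ∩ {a | σ a ≤ a} = {a | σ a = a} := by
    ext a
    exact le_antisymm_iff.symm.trans eq_comm
  have := Set.ncard_union_add_ncard_inter {a | a ≤ σ a} {a | σ a ≤ a}
  rw [hunion, hinter, ← hswap, Set.ncard_univ, ← two_mul] at this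
  exact this.symm

theorem natCard_invariantFunction [Finite α] (hσ : σ.Involutive) {a b : ℕ}
    (ha : Nat.card {x // σ x = x} = a) (hab : Nat.card α = a + 2 * b) :
    Nat.card {f : α → β // ∀ x, f (σ x) = f x} = Nat.card β ^ (a + b) := by
  classical
  let _ : LinearOrder α := linearOrderOfSTO WellOrderingRel
  have hmin : Nat.card {x // x ≤ σ x} = a + b := by
    have := two_mul_natCard_le_apply_of_involutive hσ
    lia
  rw [Nat.card_congr (invariantFunctionEquiv hσ), Nat.card_fun, hmin]

end InvariantFunctions

theorem natCard_pow_eq_self_pi {ι : Type*} [Fintype ι] (M : ι → Type*) [∀ i, Monoid (M i)]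
    (n : ℕ) :
    Nat.card {x : ∀ i, M i // x ^ n = x} = ∏ i, Nat.card {y : M i // y ^ n = y} := by
  have hiff (x : ∀ i, M i) : x ^ n = x ↔ ∀ i, x i ^ n = x i := funext_iff
  rw [Nat.card_congr (Equiv.subtypeEquivRight hiff),
    Nat.card_congr (Equiv.subtypePiEquivPi (p := fun i (y : M i) ↦ y ^ n = y)), Nat.card_pi]

section FiniteField

open Polynomial

theorem natCard_pow_eq_self_le (K : Type*) [Field K] {n : ℕ} (hn : 1 < n) :
    Nat.card {x : K // x ^ n = x} ≤ n := by
  have hne : (X ^ n - X : K[X]) ≠ 0 := FiniteField.X_pow_card_sub_X_ne_zero K hn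
  have hroots : {x : K | x ^ n = x} = (X ^ n - X : K[X]).rootSet K := by
    ext x
    simp [mem_rootSet_of_ne hne, sub_eq_zero]
  calc
    Nat.card {x : K // x ^ n = x} = ((X ^ n - X : K[X]).rootSet K).ncard := by rw [← hroots]; rfl
    _ ≤ (X ^ n - X : K[X]).natDegree := ncard_rootSet_le _ K
    _ = n := FiniteField.X_pow_card_sub_X_natDegree_eq K hn

variable (F K : Type*) [Field F] [Fintype F] [Field K] [Algebra F K] [Finite K]

theorem natCard_pow_card_eq_self :
    Nat.card {x : K // x ^ Fintype.card F = x} = Fintype.card F := by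
  refine (natCard_pow_eq_self_le K Fintype.one_lt_card).antisymm ?_
  let ι (y : F) : {x : K // x ^ Fintype.card F = x} :=
    ⟨algebraMap F K y, by rw [← map_pow, FiniteField.pow_card]⟩
  have hι : ι.Injective := fun x y h ↦ (algebraMap F K).injective (congrArg Subtype.val h)
  exact Nat.card_eq_fintype_card.symm.trans_le (Nat.card_le_card_of_injective ι hι)

variable {F K} in
theorem natCard_eq_or_eq_sq_of_pow_eq_self (hK : ∀ x : K, x ^ Fintype.card F ^ 2 = x) :
    Nat.card K = Fintype.card F ∨ Nat.card K = Fintype.card F ^ 2 := by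
  have hq : 1 < Fintype.card F := Fintype.one_lt_card
  have hcard : Nat.card K = Fintype.card F ^ Module.finrank F K := by
    rw [Module.natCard_eq_pow_finrank (K := F), Nat.card_eq_fintype_card]
  have hle : Nat.card K ≤ Fintype.card F ^ 2 := by
    rw [← Nat.card_congr (Equiv.subtypeUnivEquiv hK)]
    exact natCard_pow_eq_self_le K (Nat.one_lt_pow two_ne_zero hq)
  have hpos : 0 < Module.finrank F K := Module.finrank_pos
  have hfinrank : Module.finrank F K ≤ 2 := (Nat.pow_le_pow_iff_right hq).mp (hcard ▸ hle)
  rw [hcard]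
  interval_cases Module.finrank F K <;> simp

end FiniteField

section Units

theorem nonempty_units_pi_mulEquiv_of_natCard_eq {ι : Type*} [Finite ι] {K : ι → Type*}
    [∀ i, Field (K i)] [∀ i, Finite (K i)] {a m : ℕ} (hι : Nat.card ι = a)
    (hK : ∀ i, Nat.card (K i) = m) :
    Nonempty ((∀ i, K i)ˣ ≃* (Fin a → C (m - 1))) := by
  have e (i : ι) : (K i)ˣ ≃* C (m - 1) :=
    mulEquivOfCyclicCardEq (by rw [Nat.card_units, hK]; exact (Nat.card_zmod _).symm)
  exact ⟨MulEquiv.piUnits.trans ((MulEquiv.piCongrRight e).trans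
    (MulEquiv.arrowCongr (Finite.equivFinOfCardEq hι) (MulEquiv.refl _)))⟩

theorem nonempty_units_pi_mulEquiv {ι : Type*} [Finite ι] {K : ι → Type*}
    [∀ i, Field (K i)] [∀ i, Finite (K i)] {q : ℕ} (hq : 1 < q)
    (hK : ∀ i, Nat.card (K i) = q ∨ Nat.card (K i) = q ^ 2) {a b : ℕ}
    (hι : Nat.card ι = a + b) (hcard : Nat.card (∀ i, K i) = q ^ (a + 2 * b)) :
    Nonempty ((∀ i, K i)ˣ ≃* (Fin a → C (q - 1)) × (Fin b → C (q ^ 2 - 1))) := by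
  classical
  have := Fintype.ofFinite ι
  let P (i : ι) : Prop := Nat.card (K i) = q
  have hP (i : {i // P i}) : Nat.card (K i) = q := i.2
  have hnP (i : {i // ¬P i}) : Nat.card (K i) = q ^ 2 := (hK i).resolve_left i.2
  let e := RingEquiv.piEquivPiSubtypeProd P K
  have hsum : Nat.card {i // P i} + Nat.card {i // ¬P i} = a + b := by
    rw [← hι, ← Nat.card_sum, Nat.card_congr (Equiv.sumCompl P)]
  have hprod : Nat.card {i // P i} + 2 * Nat.card {i // ¬P i} = a + 2 * b := by
    rw [← Nat.pow_right_inj hq]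
    simp only [← hcard, Nat.card_congr e.toEquiv, Nat.card_prod, Nat.card_pi, hP, hnP,
      Finset.prod_const, Finset.card_univ, Nat.card_eq_fintype_card, pow_add, pow_mul]
  obtain ⟨e₁⟩ := nonempty_units_pi_mulEquiv_of_natCard_eq (a := a) (by lia) hP
  obtain ⟨e₂⟩ := nonempty_units_pi_mulEquiv_of_natCard_eq (a := b) (by lia) hnP
  exact ⟨(Units.mapEquiv e.toMulEquiv).trans (MulEquiv.prodUnits.trans (e₁.prodCongr e₂))⟩

variable {F A : Type*} [Field F] [Fintype F] [CommRing A] [Algebra F A] [Finite A]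

theorem nonempty_units_mulEquiv_of_pow_card_sq_eq_self (hA : ∀ x : A, x ^ Fintype.card F ^ 2 = x)
    {a b : ℕ} (hcard : Nat.card A = Fintype.card F ^ (a + 2 * b))
    (hfix : Nat.card {x : A // x ^ Fintype.card F = x} = Fintype.card F ^ (a + b)) :
    Nonempty (Aˣ ≃* (Fin a → C (Fintype.card F - 1)) × (Fin b → C (Fintype.card F ^ 2 - 1))) := by
  have hq : 1 < Fintype.card F := Fintype.one_lt_card
  have : IsReduced A := (isReduced_iff_pow_one_lt _ (Nat.one_lt_pow two_ne_zero hq)).mpr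
    fun x hx ↦ (hA x).symm.trans hx
  let K (I : MaximalSpectrum A) : Type _ := A ⧸ I.asIdeal
  let _ (I : MaximalSpectrum A) : Field (K I) := Ideal.Quotient.field I.asIdeal
  let e : A ≃+* ∀ I, K I := (IsArtinianRing.equivPi A).toRingEquiv
  have _ (I : MaximalSpectrum A) : Finite (K I) :=
    Finite.of_surjective _ Ideal.Quotient.mk_surjective
  have hK (I : MaximalSpectrum A) (y : K I) : y ^ Fintype.card F ^ 2 = y := by
    obtain ⟨x, rfl⟩ := Ideal.Quotient.mk_surjective y
    rw [← map_pow, hA]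
  have := Fintype.ofFinite (MaximalSpectrum A)
  have hspec : Nat.card (MaximalSpectrum A) = a + b := by
    rw [← Nat.pow_right_inj hq]
    have hiff (x : A) : x ^ Fintype.card F = x ↔ e x ^ Fintype.card F = e x := by
      rw [← map_pow, e.injective.eq_iff]
    rw [← hfix, Nat.card_congr (e.toEquiv.subtypeEquiv (q := fun y ↦ y ^ Fintype.card F = y) hiff),
      natCard_pow_eq_self_pi]
    simp only [natCard_pow_card_eq_self, Finset.prod_const, Finset.card_univ,
      Nat.card_eq_fintype_card]
  obtain ⟨u⟩ := nonempty_units_pi_mulEquiv hq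
    (fun I ↦ natCard_eq_or_eq_sq_of_pow_eq_self (hK I)) hspec
    (by rw [← hcard, Nat.card_congr e.toEquiv])
  exact ⟨(Units.mapEquiv e.toMulEquiv).trans u⟩

end Units

section MonoidAlgebra

theorem involutive_pow {M : Type*} [Monoid M] {n : ℕ} (hM : ∀ g : M, g ^ n ^ 2 = g) :
    Function.Involutive fun g : M ↦ g ^ n :=
  fun g ↦ by simp only [← pow_mul, ← sq, hM g]

theorem coeff_mapDomain_of_involutive {R α : Type*} [Semiring R] {σ : α → α}
    (hσ : σ.Involutive) (x : MonoidAlgebra R α) (g : α) :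
    (MonoidAlgebra.mapDomain σ x).coeff g = x.coeff (σ g) :=
  Finsupp.mapDomain_equiv_apply (f := hσ.toPerm) x.coeff g

variable {F M : Type*} [Field F] [Fintype F] [CommMonoid M]

theorem pow_card_eq_mapDomain (x : MonoidAlgebra F M) :
    x ^ Fintype.card F = MonoidAlgebra.mapDomain (· ^ Fintype.card F) x := by
  have : FiniteField.frobeniusAlgHom F (MonoidAlgebra F M) =
      MonoidAlgebra.mapDomainAlgHom F F (powMonoidHom (Fintype.card F)) := by
    ext g
    simp [MonoidAlgebra.single_pow]
  exact DFunLike.congr_fun this x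

theorem coeff_pow_card (hM : ∀ g : M, g ^ Fintype.card F ^ 2 = g) (x : MonoidAlgebra F M)
    (g : M) : (x ^ Fintype.card F).coeff g = x.coeff (g ^ Fintype.card F) := by
  rw [pow_card_eq_mapDomain, coeff_mapDomain_of_involutive (involutive_pow hM)]

theorem monoidAlgebra_pow_card_sq_eq_self (hM : ∀ g : M, g ^ Fintype.card F ^ 2 = g)
    (x : MonoidAlgebra F M) : x ^ Fintype.card F ^ 2 = x := by
  ext g
  rw [sq, pow_mul, coeff_pow_card hM, coeff_pow_card hM, ← pow_mul, ← sq, hM]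

theorem natCard_monoidAlgebra (R α : Type*) [Semiring R] [Finite α] :
    Nat.card (MonoidAlgebra R α) = Nat.card R ^ Nat.card α := by
  rw [Nat.card_congr (MonoidAlgebra.coeffEquiv.trans Finsupp.equivFunOnFinite), Nat.card_fun]

theorem natCard_pow_card_eq_self_monoidAlgebra [Finite M]
    (hM : ∀ g : M, g ^ Fintype.card F ^ 2 = g) {a b : ℕ}
    (ha : Nat.card {g : M // g ^ Fintype.card F = g} = a) (hab : Nat.card M = a + 2 * b) :
    Nat.card {x : MonoidAlgebra F M // x ^ Fintype.card F = x} = Fintype.card F ^ (a + b) := by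
  let e : MonoidAlgebra F M ≃ (M → F) := MonoidAlgebra.coeffEquiv.trans Finsupp.equivFunOnFinite
  have hiff (x : MonoidAlgebra F M) :
      x ^ Fintype.card F = x ↔ ∀ g, e x (g ^ Fintype.card F) = e x g := by
    simp only [MonoidAlgebra.ext_iff, Finsupp.ext_iff, coeff_pow_card hM]
    rfl
  rw [Nat.card_congr (e.subtypeEquiv
      (q := fun f ↦ ∀ g, f (g ^ Fintype.card F) = f g) hiff),
    natCard_invariantFunction (involutive_pow hM) ha hab, Nat.card_eq_fintype_card]

theorem nonempty_units_monoidAlgebra_mulEquiv_s7 [Finite M]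
    (hM : ∀ g : M, g ^ Fintype.card F ^ 2 = g) {a b : ℕ}
    (ha : Nat.card {g : M // g ^ Fintype.card F = g} = a) (hab : Nat.card M = a + 2 * b) :
    Nonempty ((MonoidAlgebra F M)ˣ ≃*
      (Fin a → C (Fintype.card F - 1)) × (Fin b → C (Fintype.card F ^ 2 - 1))) := by
  have hcard : Nat.card (MonoidAlgebra F M) = Fintype.card F ^ (a + 2 * b) := by
    rw [natCard_monoidAlgebra, hab, Nat.card_eq_fintype_card]
  have : Finite (MonoidAlgebra F M) :=
    Nat.finite_of_card_ne_zero (hcard ▸ pow_ne_zero _ Fintype.card_ne_zero)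
  exact nonempty_units_mulEquiv_of_pow_card_sq_eq_self (monoidAlgebra_pow_card_sq_eq_self hM) hcard
    (natCard_pow_card_eq_self_monoidAlgebra hM ha hab)

end MonoidAlgebra

open Finset in
theorem unit_group_stmt_7_general {F G : Type*} [Field F] [Fintype F] [CommGroup G] [Fintype G]
    [DecidableEq G] {m : ℕ} (hG : ∀ g : G, g ^ m = 1) {r : ZMod m}
    (hq : (Fintype.card F : ZMod m) = r) (hr : r ^ 2 = 1) {a b : ℕ}
    (ha : #{g : G | g ^ r.val = g} = a) (hab : Fintype.card G = a + 2 * b) :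
    Nonempty ((MonoidAlgebra F G)ˣ ≃*
      (Fin a → C (Fintype.card F - 1)) × (Fin b → C (Fintype.card F ^ 2 - 1))) := by
  have hpow (g : G) : g ^ Fintype.card F = g ^ r.val := by
    rw [← hq, ZMod.val_natCast, ← pow_eq_pow_mod _ (hG g)]
  have hsq (g : G) : g ^ Fintype.card F ^ 2 = g := by
    have hmod : Fintype.card F ^ 2 ≡ 1 [MOD m] := by
      rw [← ZMod.natCast_eq_natCast_iff, Nat.cast_pow, hq, hr, Nat.cast_one]
    rw [pow_eq_pow_mod _ (hG g), hmod, ← pow_eq_pow_mod _ (hG g), pow_one]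
  refine nonempty_units_monoidAlgebra_mulEquiv_s7 hsq ?_ (Nat.card_eq_fintype_card.trans hab)
  simp only [hpow, Nat.card_eq_fintype_card, Fintype.card_subtype, ha]

theorem unit_group_stmt_7 (F : Type*) [Field F] [Fintype F] (p n : ℕ)
    (hp : p.Prime) (hp2 : 2 < p) [CharP F p] (hn : 0 < n)
    (hF : Fintype.card F = p ^ n) :
    (((p ^ n : ZMod 8) = 1) →
      Nonempty ((MonoidAlgebra F (C 8 × C 2 × C 2))ˣ ≃* ((Fin (32) → C (p ^ n - 1))))) ∧
    (((p ^ n : ZMod 8) = -1) →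
      Nonempty ((MonoidAlgebra F (C 8 × C 2 × C 2))ˣ ≃* ((Fin (8) → C (p ^ n - 1)) × (Fin (12) → C (p ^ (2 * n) - 1))))) ∧
    (((p ^ n : ZMod 8) = 3) →
      Nonempty ((MonoidAlgebra F (C 8 × C 2 × C 2))ˣ ≃* ((Fin (8) → C (p ^ n - 1)) × (Fin (12) → C (p ^ (2 * n) - 1))))) ∧
    (((p ^ n : ZMod 8) = -3) →
      Nonempty ((MonoidAlgebra F (C 8 × C 2 × C 2))ˣ ≃* ((Fin (16) → C (p ^ n - 1)) × (Fin (8) → C (p ^ (2 * n) - 1))))) := by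
  have hG : ∀ g : C 8 × C 2 × C 2, g ^ 8 = 1 := by decide
  have hq : (Fintype.card F : ZMod 8) = p ^ n := by rw [hF, Nat.cast_pow]
  rw [mul_comm 2 n, pow_mul, ← hF]
  refine ⟨fun h ↦ ?_, fun h ↦ ?_, fun h ↦ ?_, fun h ↦ ?_⟩
  · obtain ⟨e⟩ := unit_group_stmt_7_general (a := 32) (b := 0) hG (hq.trans h) (by decide)
      (by decide) rfl
    exact ⟨e.trans MulEquiv.prodUnique⟩
  all_goals exact unit_group_stmt_7_general hG (hq.trans h) (by decide) (by decide) rfl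
end
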